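/- Suppose the system satisfies monotonicity in payoffs and that for every user i there exists a priority decision d with p_i(d) > 0. Then for every nonempty subset S ⊆ N and every nonzero α ∈ ℝⁿ with α ⪰ 0 and α_i = 0 for i ∉ S, max_{d ∈ D(S)} ⟨α, p(d)^S⟩ > 0. -/

import Mathlib

/-! Give the highest priority to a user `i ∈ S` with `α_i > 0`, and fill the next `|S| - 1` ranks
with the rest of `S`. No user precedes `i`, so by monotonicity its payoff is the largest one it can
get, which is positive; every other term of `⟨α, p(d)^S⟩` is nonnegative.
-/

open Finset Set

/-- `inDS S d` : the priority decision `d` assigns the `|S|` highest priorities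
(i.e. the ranks `k` with `(k : ℕ) < S.card`) exactly to the users in `S`. -/
def inDS {n : ℕ} (S : Finset (Fin n)) (d : Equiv.Perm (Fin n)) : Prop :=
  ∀ k : Fin n, d k ∈ S ↔ (k : ℕ) < S.card

/-- The projection `x^S` of a vector on the coordinates in `S`. -/
def projS {n : ℕ} (S : Finset (Fin n)) (x : Fin n → ℝ) : Fin n → ℝ :=
  fun i => if i ∈ S then x i else 0

/-- Euclidean inner product on `ℝⁿ`. -/
def ip {n : ℕ} (a b : Fin n → ℝ) : ℝ := ∑ i, a i * b i

/-- `P = {p(d) : d ∈ D}`. -/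
def Pfull {n : ℕ} (p : Equiv.Perm (Fin n) → Fin n → ℝ) : Set (Fin n → ℝ) :=
  Set.range p

/-- `P^S = {p(d)^S : d ∈ D(S)}`. -/
def PS {n : ℕ} (p : Equiv.Perm (Fin n) → Fin n → ℝ) (S : Finset (Fin n)) :
    Set (Fin n → ℝ) :=
  {y | ∃ d : Equiv.Perm (Fin n), inDS S d ∧ y = projS S (p d)}

/-- `C` : the set of nonnegative vectors dominated by a point of `conv(P)`. -/
def Cfull {n : ℕ} (p : Equiv.Perm (Fin n) → Fin n → ℝ) : Set (Fin n → ℝ) :=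
  {q | (∀ i, 0 ≤ q i) ∧ ∃ x ∈ convexHull ℝ (Pfull p), ∀ i, q i ≤ x i}

/-- `C^S` : nonnegative vectors supported on `S` dominated by a point of `conv(P^S)`. -/
def CS {n : ℕ} (p : Equiv.Perm (Fin n) → Fin n → ℝ) (S : Finset (Fin n)) :
    Set (Fin n → ℝ) :=
  {q | (∀ i, 0 ≤ q i) ∧ (∀ i, i ∉ S → q i = 0) ∧
    ∃ x ∈ convexHull ℝ (PS p S), ∀ i, q i ≤ x i}

/-- `B^S` : nonnegative vectors supported on `S` dominating a point of `conv(P^S)`. -/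
def BS {n : ℕ} (p : Equiv.Perm (Fin n) → Fin n → ℝ) (S : Finset (Fin n)) :
    Set (Fin n → ℝ) :=
  {q | (∀ i, 0 ≤ q i) ∧ (∀ i, i ∉ S → q i = 0) ∧
    ∃ x ∈ convexHull ℝ (PS p S), ∀ i, x i ≤ q i}

/-- `S_i(d)` : the set of users with higher priority than user `i` under decision `d`. -/
def higherSet {n : ℕ} (d : Equiv.Perm (Fin n)) (i : Fin n) : Set (Fin n) :=
  {j | (d.symm j : ℕ) < (d.symm i : ℕ)}

/-- Monotonicity in payoffs: if `S_i(d₁) ⊆ S_i(d₂)` then `p_i(d₁) ≥ p_i(d₂)`. -/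
def Mono {n : ℕ} (p : Equiv.Perm (Fin n) → Fin n → ℝ) : Prop :=
  ∀ d₁ d₂ : Equiv.Perm (Fin n), ∀ i : Fin n,
    higherSet d₁ i ⊆ higherSet d₂ i → p d₂ i ≤ p d₁ i

/-- The inner-bound region `R_IB`. -/
def RIB {n : ℕ} (p : Equiv.Perm (Fin n) → Fin n → ℝ) : Set (Fin n → ℝ) :=
  {q | (∀ i, 0 ≤ q i) ∧ ∃ α : Fin n → ℝ, (∀ i, 0 < α i) ∧
    ∀ S : Finset (Fin n), ∀ d : Equiv.Perm (Fin n), inDS S d →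
      ∑ i ∈ S, α i * q i ≤ ∑ i ∈ S, α i * p d i}

/-- The region `R = {q ⪰ 0 : ∀ S, q^S ∈ C^S \ B^S}`. -/
def Rreg {n : ℕ} (p : Equiv.Perm (Fin n) → Fin n → ℝ) : Set (Fin n → ℝ) :=
  {q | (∀ i, 0 ≤ q i) ∧ ∀ S : Finset (Fin n), projS S q ∈ CS p S \ BS p S}

theorem exists_perm_iff_of_card_eq {β : Type*} [Finite β] {P Q : β → Prop}
    (h : Nat.card {x // P x} = Nat.card {x // Q x}) :
    ∃ e : Equiv.Perm β, ∀ x, Q (e x) ↔ P x := by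
  classical
  cases nonempty_fintype β
  let e : {x // P x} ≃ {x // Q x} := (Finite.card_eq.mp h).some
  exact ⟨e.extendSubtype, fun x =>
    ⟨not_imp_not.mp (e.extendSubtype_not_mem x), e.extendSubtype_mem x⟩⟩

section PriorityDecision

variable {n : ℕ} {S : Finset (Fin n)} {i : Fin n} {d : Equiv.Perm (Fin n)}

theorem exists_inDS (S : Finset (Fin n)) : ∃ d, inDS S d := by
  refine exists_perm_iff_of_card_eq ?_
  have hS : #S ≤ n := card_finset_fin_le S
  simp [Nat.card_eq_fintype_card, Fintype.card_subtype, Fin.card_filter_val_lt, hS]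

theorem inDS.trans {σ : Equiv.Perm (Fin n)} (hd : inDS S d) (hσ : ∀ j, σ j ∈ S ↔ j ∈ S) :
    inDS S (d.trans σ) :=
  fun k => (hσ (d k)).trans (hd k)

theorem higherSet_apply_zero [NeZero n] (d : Equiv.Perm (Fin n)) :
    higherSet d (d 0) = ∅ := by
  simp [higherSet]

theorem exists_inDS_higherSet_eq_empty (hi : i ∈ S) :
    ∃ d, inDS S d ∧ higherSet d i = ∅ := by
  have : NeZero n := i.neZero
  obtain ⟨d, hd⟩ := exists_inDS S
  have h0 : d 0 ∈ S := (hd 0).mpr (Finset.card_pos.mpr ⟨i, hi⟩)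
  have hswap (j : Fin n) : Equiv.swap (d 0) i j ∈ S ↔ j ∈ S := by
    rw [Equiv.swap_apply_def]
    grind
  refine ⟨d.trans (Equiv.swap (d 0) i), hd.trans hswap, ?_⟩
  simpa using higherSet_apply_zero (d.trans (Equiv.swap (d 0) i))

theorem Mono.le_of_higherSet_eq_empty {p : Equiv.Perm (Fin n) → Fin n → ℝ} (hp : Mono p)
    (h : higherSet d i = ∅) (d' : Equiv.Perm (Fin n)) : p d' i ≤ p d i :=
  hp d d' i (h ▸ Set.empty_subset _)

theorem ip_projS (S : Finset (Fin n)) (a x : Fin n → ℝ) :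
    ip a (projS S x) = ∑ i ∈ S, a i * x i := by
  simp [ip, projS]

theorem ip_projS_pos {a x : Fin n → ℝ} (ha : ∀ j ∈ S, 0 ≤ a j)
    (hx : ∀ j ∈ S, 0 ≤ x j) (h : ∃ i ∈ S, 0 < a i ∧ 0 < x i) : 0 < ip a (projS S x) := by
  obtain ⟨i, hi, hai, hxi⟩ := h
  rw [ip_projS]
  exact Finset.sum_pos' (fun j hj => mul_nonneg (ha j hj) (hx j hj)) ⟨i, hi, mul_pos hai hxi⟩

end PriorityDecision

theorem stmt18 {n : ℕ} (hn : 1 ≤ n)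
    (p : Equiv.Perm (Fin n) → Fin n → ℝ) (hp : ∀ d i, 0 ≤ p d i)
    (hmono : Mono p) (hpos : ∀ i : Fin n, ∃ d : Equiv.Perm (Fin n), 0 < p d i) :
    ∀ S : Finset (Fin n), S.Nonempty →
      ∀ α : Fin n → ℝ, α ≠ 0 → (∀ i, 0 ≤ α i) → (∀ i, i ∉ S → α i = 0) →
        0 < sSup ((fun d => ip α (projS S (p d))) '' {d | inDS S d}) := by
  intro S _ α hα hα0 hαS
  obtain ⟨i, hi⟩ : ∃ i, α i ≠ 0 := Function.ne_iff.mp hα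
  have hiS : i ∈ S := not_imp_comm.mp (hαS i) hi
  obtain ⟨d, hdS, hdi⟩ := exists_inDS_higherSet_eq_empty hiS
  obtain ⟨d', hd'⟩ := hpos i
  have hpi : 0 < p d i := hd'.trans_le (hmono.le_of_higherSet_eq_empty hdi d')
  have hip : 0 < ip α (projS S (p d)) :=
    ip_projS_pos (fun j _ => hα0 j) (fun j _ => hp d j) ⟨i, hiS, (hα0 i).lt_of_ne' hi, hpi⟩
  exact lt_csSup_of_lt (Set.toFinite _).bddAbove ⟨d, hdS, rfl⟩ hip
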